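/- arXiv:2409.04379 — 8 statements merged into one kernel-verified Lean document; each statement's English description precedes it below -/
import Mathlib

section
/- Let M₁, M₂, M₃ be matrices in SL(2,ℂ). Set a = tr M₁, b = tr M₂, c = tr M₃, d = tr(M₁M₂M₃), and X = tr(M₁M₂), Y = tr(M₂M₃), Z = tr(M₁M₃). Then X² + Y² + Z² + XYZ − AX − BY − CZ − D = 0, where A = ab+cd, B = bc+ad, C = ac+bd, D = 4−a²−b²−c²−d²−abcd. -/
open Matrix

theorem fricke_aux (p q r s t u v w x y z k a b c d e X Y Z m n o : ℂ)
    (hm : m = p * s - q * r) (hn : n = t * w - u * v) (ho : o = x * k - y * z)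
    (ha : a = p + s) (hb : b = t + w) (hc : c = x + k)
    (hX : X = p * t + q * v + (r * u + s * w))
    (hY : Y = t * x + u * z + (v * y + w * k))
    (hZ : Z = p * x + q * z + (r * y + s * k))
    (hd : d = (p * t + q * v) * x + (p * u + q * w) * z
      + ((r * t + s * v) * y + (r * u + s * w) * k))
    (he : e = a * Y + b * Z + c * X - a * b * c - d) :
    d * e = a ^ 2 * n * o + b ^ 2 * m * o + c ^ 2 * m * n + X ^ 2 * o + Y ^ 2 * m + Z ^ 2 * n
      - a * b * X * o - b * c * Y * m - a * c * Z * n + X * Y * Z - 4 * m * n * o := by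
  have he' : e = (p * x + q * z) * t + (p * y + q * k) * v
      + ((r * x + s * z) * u + (r * y + s * k) * w) := by
    subst he hd ha hb hc hX hY hZ; ring
  clear he
  subst he' hd ha hb hc hX hY hZ hm hn ho
  ring

/-- The Fricke trace identity: for `M₁ M₂ M₃ ∈ SL(2,ℂ)`, with `a,b,c,d` the traces of
`M₁, M₂, M₃, M₁M₂M₃` and `X,Y,Z` the traces of `M₁M₂, M₂M₃, M₁M₃`, one has
`X² + Y² + Z² + XYZ − AX − BY − CZ − D = 0` where `A = ab+cd`, `B = bc+ad`, `C = ac+bd`,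
`D = 4 − a² − b² − c² − d² − abcd`. -/
theorem fricke_relation (M₁ M₂ M₃ : Matrix.SpecialLinearGroup (Fin 2) ℂ)
    (a b c d X Y Z A B C D : ℂ)
    (ha : a = Matrix.trace (M₁ : Matrix (Fin 2) (Fin 2) ℂ))
    (hb : b = Matrix.trace (M₂ : Matrix (Fin 2) (Fin 2) ℂ))
    (hc : c = Matrix.trace (M₃ : Matrix (Fin 2) (Fin 2) ℂ))
    (hd : d = Matrix.trace ((M₁ * M₂ * M₃ : Matrix.SpecialLinearGroup (Fin 2) ℂ) :
      Matrix (Fin 2) (Fin 2) ℂ))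
    (hX : X = Matrix.trace ((M₁ * M₂ : Matrix.SpecialLinearGroup (Fin 2) ℂ) :
      Matrix (Fin 2) (Fin 2) ℂ))
    (hY : Y = Matrix.trace ((M₂ * M₃ : Matrix.SpecialLinearGroup (Fin 2) ℂ) :
      Matrix (Fin 2) (Fin 2) ℂ))
    (hZ : Z = Matrix.trace ((M₁ * M₃ : Matrix.SpecialLinearGroup (Fin 2) ℂ) :
      Matrix (Fin 2) (Fin 2) ℂ))
    (hA : A = a * b + c * d) (hB : B = b * c + a * d) (hC : C = a * c + b * d)
    (hD : D = 4 - a ^ 2 - b ^ 2 - c ^ 2 - d ^ 2 - a * b * c * d) :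
    X ^ 2 + Y ^ 2 + Z ^ 2 + X * Y * Z - A * X - B * Y - C * Z - D = 0 := by
  have h1 := M₁.det_coe
  have h2 := M₂.det_coe
  have h3 := M₃.det_coe
  simp only [Matrix.det_fin_two] at h1 h2 h3
  simp only [Matrix.SpecialLinearGroup.coe_mul, Matrix.trace_fin_two, Matrix.mul_apply,
    Fin.sum_univ_two] at ha hb hc hd hX hY hZ
  have key := fricke_aux _ _ _ _ _ _ _ _ _ _ _ _ a b c d _ X Y Z 1 1 1
    h1.symm h2.symm h3.symm ha hb hc hX hY hZ hd rfl
  rw [hA, hB, hC, hD]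
  linear_combination -key
end

section
/- For every θ ∈ ℝ⁴, the quadruple of traces (2cos(π·Ok(θ)₁), 2cos(π·Ok(θ)₂), 2cos(π·Ok(θ)₃), 2cos(π·Ok(θ)₄)) has the same Fricke coefficients (A,B,C,D) as the quadruple (2cos(πθ₁), 2cos(πθ₂), 2cos(πθ₃), 2cos(πθ₄)). -/
open Real

/-- The Okamoto transformation `Ok : ℝ⁴ → ℝ⁴`,
`Ok(θ)ᵢ = θᵢ − (θ₁+θ₂+θ₃+θ₄)/2 + 1`. -/
noncomputable def Ok (θ : Fin 4 → ℝ) : Fin 4 → ℝ :=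
  fun i => θ i - (θ 0 + θ 1 + θ 2 + θ 3) / 2 + 1

/-- The Fricke coefficients `(A,B,C,D)` of a quadruple of traces `(a,b,c,d)`:
`A = ab+cd`, `B = bc+ad`, `C = ac+bd`, `D = 4−a²−b²−c²−d²−abcd`. -/
noncomputable def frickeCoeffs (a b c d : ℝ) : ℝ × ℝ × ℝ × ℝ :=
  (a * b + c * d, b * c + a * d, a * c + b * d,
    4 - a ^ 2 - b ^ 2 - c ^ 2 - d ^ 2 - a * b * c * d)

theorem aux_two (x y z w s : ℝ) (hs : x + y + z + w = 2 * s) :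
    cos (x - s) * cos (y - s) + cos (z - s) * cos (w - s) = cos x * cos y + cos z * cos w := by
  have p : ∀ u v : ℝ, cos u * cos v = (cos (u + v) + cos (u - v)) / 2 := by
    intro u v
    rw [cos_add, cos_sub]; ring
  rw [p (x - s), p (z - s), p x, p z]
  have h1 : x - s + (y - s) = -(z + w) := by linarith
  have h2 : z - s + (w - s) = -(x + y) := by linarith
  have h3 : x - s - (y - s) = x - y := by ring
  have h4 : z - s - (w - s) = z - w := by ring
  rw [h1, h2, h3, h4, cos_neg, cos_neg]; ring

theorem aux_D (x y z w : ℝ) :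
    cos x ^ 2 + cos y ^ 2 + cos z ^ 2 + cos w ^ 2 + 4 * (cos x * cos y * cos z * cos w) =
      2 + (cos (2 * x) + cos (2 * y) + cos (2 * z) + cos (2 * w)
        + cos (x + y + z + w) + cos (x + y - z - w) + cos (x - y + z - w) + cos (x - y - z + w)
        + cos (-x + y + z + w) + cos (x - y + z + w) + cos (x + y - z + w)
        + cos (x + y + z - w)) / 2 := by
  simp only [cos_two_mul, cos_add, cos_sub, sin_add, sin_sub, cos_neg, sin_neg]
  ring

theorem aux_four (x y z w s : ℝ) (hs : x + y + z + w = 2 * s) :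
    cos (x - s) ^ 2 + cos (y - s) ^ 2 + cos (z - s) ^ 2 + cos (w - s) ^ 2
        + 4 * (cos (x - s) * cos (y - s) * cos (z - s) * cos (w - s)) =
      cos x ^ 2 + cos y ^ 2 + cos z ^ 2 + cos w ^ 2 + 4 * (cos x * cos y * cos z * cos w) := by
  rw [aux_D, aux_D]
  have e1 : 2 * (x - s) = -(-x + y + z + w) := by linarith
  have e2 : 2 * (y - s) = -(x - y + z + w) := by linarith
  have e3 : 2 * (z - s) = -(x + y - z + w) := by linarith
  have e4 : 2 * (w - s) = -(x + y + z - w) := by linarith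
  have e5 : x - s + (y - s) + (z - s) + (w - s) = -(x + y + z + w) := by linarith
  have e6 : x - s + (y - s) - (z - s) - (w - s) = x + y - z - w := by ring
  have e7 : x - s - (y - s) + (z - s) - (w - s) = x - y + z - w := by ring
  have e8 : x - s - (y - s) - (z - s) + (w - s) = x - y - z + w := by ring
  have e9 : -(x - s) + (y - s) + (z - s) + (w - s) = -(2 * x) := by linarith
  have e10 : x - s - (y - s) + (z - s) + (w - s) = -(2 * y) := by linarith
  have e11 : x - s + (y - s) - (z - s) + (w - s) = -(2 * z) := by linarith
  have e12 : x - s + (y - s) + (z - s) - (w - s) = -(2 * w) := by linarith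
  rw [e1, e2, e3, e4, e5, e6, e7, e8, e9, e10, e11, e12]
  simp only [cos_neg]
  ring

/-- The quadruple of traces associated to the Okamoto transform `Ok(θ)` of an angle
vector `θ` has the same Fricke coefficients as the quadruple associated to `θ`. -/
theorem frickeCoeffs_Ok_invariant (θ : Fin 4 → ℝ) :
    frickeCoeffs (2 * cos (π * Ok θ 0)) (2 * cos (π * Ok θ 1))
        (2 * cos (π * Ok θ 2)) (2 * cos (π * Ok θ 3)) =
      frickeCoeffs (2 * cos (π * θ 0)) (2 * cos (π * θ 1))
        (2 * cos (π * θ 2)) (2 * cos (π * θ 3)) := by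
  obtain ⟨s, hs⟩ : ∃ s, s = (π * θ 0 + π * θ 1 + π * θ 2 + π * θ 3) / 2 := ⟨_, rfl⟩
  have hk : ∀ i, cos (π * Ok θ i) = -cos (π * θ i - s) := by
    intro i
    rw [← cos_add_pi]
    congr 1
    rw [hs, Ok]; ring
  have hA := aux_two (π * θ 0) (π * θ 1) (π * θ 2) (π * θ 3) s (by linarith)
  have hB := aux_two (π * θ 1) (π * θ 2) (π * θ 0) (π * θ 3) s (by linarith)
  have hC := aux_two (π * θ 0) (π * θ 2) (π * θ 1) (π * θ 3) s (by linarith)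
  have hD := aux_four (π * θ 0) (π * θ 1) (π * θ 2) (π * θ 3) s (by linarith)
  simp only [frickeCoeffs, hk, Prod.mk.injEq]
  refine ⟨?_, ?_, ?_, ?_⟩
  · linear_combination 4 * hA
  · linear_combination 4 * hB
  · linear_combination 4 * hC
  · linear_combination (-4) * hD
end

section
/- For every θ ∈ ℝ⁴, the quadruple of traces (2cos(π·Õk(θ)₁), 2cos(π·Õk(θ)₂), 2cos(π·Õk(θ)₃), 2cos(π·Õk(θ)₄)) has the same Fricke coefficients (A,B,C,D) as the quadruple (2cos(πθ₁), 2cos(πθ₂), 2cos(πθ₃), 2cos(πθ₄)). -/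
open Real

/-- The Okamoto transformation `Õk : ℝ⁴ → ℝ⁴`,
`Õk(θ₁,θ₂,θ₃,θ₄) = ((θ₁−θ₂−θ₃+θ₄)/2, (−θ₁+θ₂−θ₃+θ₄)/2, (−θ₁−θ₂+θ₃+θ₄)/2, (θ₁+θ₂+θ₃+θ₄)/2)`. -/
noncomputable def OkTilde (θ : Fin 4 → ℝ) : Fin 4 → ℝ :=
  ![(θ 0 - θ 1 - θ 2 + θ 3) / 2,
    (-θ 0 + θ 1 - θ 2 + θ 3) / 2,
    (-θ 0 - θ 1 + θ 2 + θ 3) / 2,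
    (θ 0 + θ 1 + θ 2 + θ 3) / 2]

theorem prod_aux (x y S T : ℝ) (hS : x + y = S) (hT : x - y = T) :
    2 * (cos x * cos y) = cos S + cos T := by
  subst hS hT
  rw [cos_add, cos_sub]; ring

theorem sq_aux (x y S T : ℝ) (hS : x + y = S) (hT : x - y = T) :
    cos x ^ 2 + cos y ^ 2 = 1 + cos S * cos T := by
  subst hS hT
  rw [cos_add, cos_sub]
  have h1 := sin_sq_add_cos_sq x
  have h2 := sin_sq_add_cos_sq y
  linear_combination (sin y ^ 2) * h1 + (1 - cos x ^ 2) * h2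

theorem fricke_aux_s5 (a b c d : ℝ) :
    frickeCoeffs (2 * cos ((a - b - c + d) / 2)) (2 * cos ((-a + b - c + d) / 2))
        (2 * cos ((-a - b + c + d) / 2)) (2 * cos ((a + b + c + d) / 2)) =
      frickeCoeffs (2 * cos a) (2 * cos b) (2 * cos c) (2 * cos d) := by
  have q1 := prod_aux ((a - b - c + d) / 2) ((-a + b - c + d) / 2) (d - c) (a - b)
    (by ring) (by ring)
  have q2 := prod_aux ((a + b + c + d) / 2) ((-a - b + c + d) / 2) (d + c) (a + b)
    (by ring) (by ring)
  have q3 := prod_aux ((-a + b - c + d) / 2) ((-a - b + c + d) / 2) (d - a) (b - c)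
    (by ring) (by ring)
  have q4 := prod_aux ((a + b + c + d) / 2) ((a - b - c + d) / 2) (d + a) (b + c)
    (by ring) (by ring)
  have q5 := prod_aux ((a - b - c + d) / 2) ((-a - b + c + d) / 2) (d - b) (a - c)
    (by ring) (by ring)
  have q6 := prod_aux ((a + b + c + d) / 2) ((-a + b - c + d) / 2) (d + b) (a + c)
    (by ring) (by ring)
  have s1 := sq_aux ((a - b - c + d) / 2) ((-a + b - c + d) / 2) (d - c) (a - b)
    (by ring) (by ring)
  have s2 := sq_aux ((a + b + c + d) / 2) ((-a - b + c + d) / 2) (d + c) (a + b)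
    (by ring) (by ring)
  have s3 := sq_aux a b _ _ rfl rfl
  have s4 := sq_aux d c _ _ rfl rfl
  have p1 := prod_aux a b _ _ rfl rfl
  have p2 := prod_aux d c _ _ rfl rfl
  have p3 := prod_aux b c _ _ rfl rfl
  have p4 := prod_aux d a _ _ rfl rfl
  have p5 := prod_aux a c _ _ rfl rfl
  have p6 := prod_aux d b _ _ rfl rfl
  generalize cos ((a - b - c + d) / 2) = A at *
  generalize cos ((-a + b - c + d) / 2) = B at *
  generalize cos ((-a - b + c + d) / 2) = C at *
  generalize cos ((a + b + c + d) / 2) = D at *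
  simp only [frickeCoeffs, Prod.mk.injEq]
  refine ⟨by linarith, by linarith, by linarith, ?_⟩
  have hm : (2 * (A * B)) * (2 * (D * C)) = (cos (d - c) + cos (a - b)) * (cos (d + c) + cos (a + b)) := by
    rw [q1, q2]
  have hn : (2 * (cos a * cos b)) * (2 * (cos d * cos c)) = (cos (a + b) + cos (a - b)) * (cos (d + c) + cos (d - c)) := by
    rw [p1, p2]
  linear_combination -4 * s1 - 4 * s2 + 4 * s3 + 4 * s4 - 4 * hm + 4 * hn

/-- The quadruple of traces associated to the Okamoto transform `Õk(θ)` of an angle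
vector `θ` has the same Fricke coefficients as the quadruple associated to `θ`. -/
theorem frickeCoeffs_OkTilde_invariant (θ : Fin 4 → ℝ) :
    frickeCoeffs (2 * cos (π * OkTilde θ 0)) (2 * cos (π * OkTilde θ 1))
        (2 * cos (π * OkTilde θ 2)) (2 * cos (π * OkTilde θ 3)) =
      frickeCoeffs (2 * cos (π * θ 0)) (2 * cos (π * θ 1))
        (2 * cos (π * θ 2)) (2 * cos (π * θ 3)) := by
  have e0 : π * OkTilde θ 0 = (π * θ 0 - π * θ 1 - π * θ 2 + π * θ 3) / 2 := by
    simp [OkTilde]; ring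
  have e1 : π * OkTilde θ 1 = (-(π * θ 0) + π * θ 1 - π * θ 2 + π * θ 3) / 2 := by
    simp [OkTilde]; ring
  have e2 : π * OkTilde θ 2 = (-(π * θ 0) - π * θ 1 + π * θ 2 + π * θ 3) / 2 := by
    simp [OkTilde]; ring
  have e3 : π * OkTilde θ 3 = (π * θ 0 + π * θ 1 + π * θ 2 + π * θ 3) / 2 := by
    simp [OkTilde]; ring
  rw [e0, e1, e2, e3]
  exact fricke_aux_s5 _ _ _ _
end

section
/- Let a, b, c, d be real numbers with |a| < 2, |b| < 2, |c| < 2, |d| < 2. If the Fricke coefficients of (a,b,c,d) satisfy (A,B,C,D) = (0,0,0,4), i.e. ab+cd = 0, bc+ad = 0, ac+bd = 0 and 4−a²−b²−c²−d²−abcd = 4, then a = b = c = d = 0. -/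
/-- If `a,b,c,d ∈ (−2,2)` have Fricke coefficients `(A,B,C,D) = (0,0,0,4)`,
then `a = b = c = d = 0`. -/
theorem cayley_traces_zero (a b c d : ℝ)
    (ha : |a| < 2) (hb : |b| < 2) (hc : |c| < 2) (hd : |d| < 2)
    (hA : a * b + c * d = 0) (hB : b * c + a * d = 0) (hC : a * c + b * d = 0)
    (hD : 4 - a ^ 2 - b ^ 2 - c ^ 2 - d ^ 2 - a * b * c * d = 4) :
    a = 0 ∧ b = 0 ∧ c = 0 ∧ d = 0 := by
  have key : ∀ x : ℝ, |x| < 2 → 0 < 4 - x ^ 2 := by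
    intro x hx
    have h := abs_lt.mp hx
    nlinarith [h.1, h.2]
  have ka := key a ha
  have kb := key b hb
  have kc := key c hc
  have kd := key d hd
  have hsum : (4 - a ^ 2) * b ^ 2 + (4 - b ^ 2) * a ^ 2 + (4 - c ^ 2) * d ^ 2
      + (4 - d ^ 2) * c ^ 2 = 0 := by
    linear_combination (-4) * hD - 2 * (a * b + c * d) * hA
  have pa := mul_nonneg kb.le (sq_nonneg a)
  have pb := mul_nonneg ka.le (sq_nonneg b)
  have pc := mul_nonneg kd.le (sq_nonneg c)
  have pd := mul_nonneg kc.le (sq_nonneg d)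
  have fin : ∀ x y : ℝ, 0 < y → y * x ^ 2 = 0 → x = 0 := by
    intro x y hy h
    rcases mul_eq_zero.mp h with h | h
    · exact absurd h hy.ne'
    · exact pow_eq_zero_iff (two_ne_zero) |>.mp h
  exact ⟨fin a _ kb (by linarith), fin b _ ka (by linarith),
    fin c _ kd (by linarith), fin d _ kc (by linarith)⟩
end

section
/- Let α = (α₁,α₂,α₃,α₄) with each αᵢ ∈ (0,2π), and set tᵢ = 2cos(αᵢ/2). If the Fricke coefficients of (t₁,t₂,t₃,t₄) equal (0,0,0,4), then α = (π,π,π,π); in particular α₁+α₂+α₃+α₄ = 4π, so the angle condition α₁+α₂+α₃+α₄ > 6π fails. -/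
open Real

/-- If `α ∈ (0,2π)⁴` is an angle vector whose associated peripheral traces
`tᵢ = 2cos(αᵢ/2)` have Fricke coefficients `(0,0,0,4)`, then `α = (π,π,π,π)`;
in particular the sum of the angles is `4π` and the angle condition
`α₁+α₂+α₃+α₄ > 6π` fails. -/
theorem cayley_angles_eq_pi (α : Fin 4 → ℝ) (hα : ∀ i, α i ∈ Set.Ioo 0 (2 * π))
    (t : Fin 4 → ℝ) (ht : ∀ i, t i = 2 * cos (α i / 2))
    (hA : t 0 * t 1 + t 2 * t 3 = 0)
    (hB : t 1 * t 2 + t 0 * t 3 = 0)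
    (hC : t 0 * t 2 + t 1 * t 3 = 0)
    (hD : 4 - t 0 ^ 2 - t 1 ^ 2 - t 2 ^ 2 - t 3 ^ 2 - t 0 * t 1 * t 2 * t 3 = 4) :
    (∀ i, α i = π) ∧ α 0 + α 1 + α 2 + α 3 = 4 * π ∧
      ¬ (α 0 + α 1 + α 2 + α 3 > 6 * π) := by
  have hlt : ∀ i, 0 < 4 - t i ^ 2 := by
    intro i
    have hi := hα i
    have hs : 0 < sin (α i / 2) :=
      sin_pos_of_pos_of_lt_pi (by linarith [hi.1]) (by linarith [hi.2])
    rw [ht i]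
    nlinarith [sin_sq_add_cos_sq (α i / 2), mul_pos hs hs]
  have key : (4 - t 1 ^ 2) * t 0 ^ 2 + (4 - t 0 ^ 2) * t 1 ^ 2
      + (4 - t 3 ^ 2) * t 2 ^ 2 + (4 - t 2 ^ 2) * t 3 ^ 2 = 0 := by
    linear_combination (-4) * hD - 2 * (t 0 * t 1 + t 2 * t 3) * hA
  have p0 := mul_nonneg (hlt 1).le (sq_nonneg (t 0))
  have p1 := mul_nonneg (hlt 0).le (sq_nonneg (t 1))
  have p2 := mul_nonneg (hlt 3).le (sq_nonneg (t 2))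
  have p3 := mul_nonneg (hlt 2).le (sq_nonneg (t 3))
  have aux : ∀ i j, (4 - t j ^ 2) * t i ^ 2 = 0 → t i = 0 := by
    intro i j h
    rcases mul_eq_zero.mp h with h | h
    · exact absurd h (hlt j).ne'
    · exact pow_eq_zero_iff (two_ne_zero) |>.mp h
  have hz : ∀ i, t i = 0 := by
    intro i
    fin_cases i
    · exact aux 0 1 (by linarith)
    · exact aux 1 0 (by linarith)
    · exact aux 2 3 (by linarith)
    · exact aux 3 2 (by linarith)
  have hpi : ∀ i, α i = π := by
    intro i
    have hi := hα i
    have hc : cos (α i / 2) = cos (π / 2) := by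
      rw [cos_pi_div_two]
      linarith [ht i, hz i]
    have := injOn_cos ⟨by linarith [hi.1], by linarith [hi.2]⟩
      ⟨by linarith [pi_pos], by linarith [pi_pos]⟩ hc
    linarith
  refine ⟨hpi, ?_, ?_⟩
  · rw [hpi 0, hpi 1, hpi 2, hpi 3]; ring
  · rw [hpi 0, hpi 1, hpi 2, hpi 3]
    have := pi_pos
    intro h
    linarith
end

section
/- Let t₁, t₂, t₃, t₄ be real numbers with |tᵢ| < 2 for each i, and for each i let ᾱᵢ be the unique number in [π, 2π) satisfying 2cos(ᾱᵢ/2) = −|tᵢ|. If the Benedetto–Goldman inequality 2(t₁²+t₂²+t₃²+t₄²) − t₁t₂t₃t₄ − 16 > √((4−t₁²)(4−t₂²)(4−t₃²)(4−t₄²)) holds, then ᾱ₁+ᾱ₂+ᾱ₃+ᾱ₄ > 6π. -/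
open Real

/-- If `t₁,t₂,t₃,t₄ ∈ (−2,2)` satisfy the Benedetto–Goldman inequality, then the angles
`ᾱᵢ ∈ [π,2π)` characterized by `2cos(ᾱᵢ/2) = −|tᵢ|` satisfy `ᾱ₁+ᾱ₂+ᾱ₃+ᾱ₄ > 6π`. -/
theorem benedetto_goldman_angle_condition (t ᾱ : Fin 4 → ℝ)
    (ht : ∀ i, |t i| < 2)
    (hᾱ : ∀ i, ᾱ i ∈ Set.Ico π (2 * π))
    (hcos : ∀ i, 2 * cos (ᾱ i / 2) = -|t i|)
    (hBG : 2 * (t 0 ^ 2 + t 1 ^ 2 + t 2 ^ 2 + t 3 ^ 2) - t 0 * t 1 * t 2 * t 3 - 16 >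
      Real.sqrt ((4 - t 0 ^ 2) * (4 - t 1 ^ 2) * (4 - t 2 ^ 2) * (4 - t 3 ^ 2))) :
    ᾱ 0 + ᾱ 1 + ᾱ 2 + ᾱ 3 > 6 * π := by
  obtain ⟨β, hβ⟩ : ∃ β : Fin 4 → ℝ, ∀ i, β i = π - ᾱ i / 2 := ⟨fun i => π - ᾱ i / 2, fun _ => rfl⟩
  have hx : ∀ i, |t i| = 2 * cos (β i) := by
    intro i
    rw [hβ, cos_pi_sub]
    linarith [hcos i]
  have hpos : ∀ i, 0 < β i := fun i => by rw [hβ]; linarith [(hᾱ i).2]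
  have hle : ∀ i, β i ≤ π / 2 := fun i => by rw [hβ]; linarith [(hᾱ i).1]
  have hs : ∀ i, 0 < sin (β i) := fun i =>
    sin_pos_of_pos_of_lt_pi (hpos i) (by linarith [hle i, pi_pos])
  have hc : ∀ i, 0 ≤ cos (β i) := fun i => by linarith [hx i, abs_nonneg (t i)]
  have hsq : ∀ i, t i ^ 2 = 4 * cos (β i) ^ 2 := fun i => by
    rw [← sq_abs, hx]; ring
  have hsc : ∀ i, sin (β i) ^ 2 = 1 - cos (β i) ^ 2 := fun i => sin_sq _
  have hP : -(t 0 * t 1 * t 2 * t 3) ≤ 16 * (cos (β 0) * cos (β 1) * cos (β 2) * cos (β 3)) := by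
    refine (neg_le_abs _).trans (le_of_eq ?_)
    rw [abs_mul, abs_mul, abs_mul, hx, hx, hx, hx]; ring
  have hS : Real.sqrt ((4 - t 0 ^ 2) * (4 - t 1 ^ 2) * (4 - t 2 ^ 2) * (4 - t 3 ^ 2))
      = 16 * (sin (β 0) * sin (β 1) * sin (β 2) * sin (β 3)) := by
    have h : ∀ i, 4 - t i ^ 2 = 4 * sin (β i) ^ 2 := fun i => by rw [hsq, hsc]; ring
    rw [h, h, h, h]
    rw [show 4 * sin (β 0) ^ 2 * (4 * sin (β 1) ^ 2) * (4 * sin (β 2) ^ 2) * (4 * sin (β 3) ^ 2)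
      = (16 * (sin (β 0) * sin (β 1) * sin (β 2) * sin (β 3))) ^ 2 by ring]
    apply Real.sqrt_sq
    have := hs 0
    have := hs 1
    have := hs 2
    have := hs 3
    positivity
  rw [hS, hsq, hsq, hsq, hsq] at hBG
  have hD : 0 < cos (β 0 - β 1) + cos (β 2 - β 3) := by
    rw [cos_sub, cos_sub]
    have := mul_nonneg (hc 0) (hc 1)
    have := mul_nonneg (hc 2) (hc 3)
    have := mul_pos (hs 0) (hs 1)
    have := mul_pos (hs 2) (hs 3)
    linarith
  have hprod : 0 < (cos (β 0 + β 1) + cos (β 2 + β 3)) * (cos (β 0 - β 1) + cos (β 2 - β 3)) := by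
    have key : (cos (β 0 + β 1) + cos (β 2 + β 3)) * (cos (β 0 - β 1) + cos (β 2 - β 3))
        = cos (β 0) ^ 2 + cos (β 1) ^ 2 + cos (β 2) ^ 2 + cos (β 3) ^ 2 - 2
          + 2 * (cos (β 0) * cos (β 1) * cos (β 2) * cos (β 3))
          - 2 * (sin (β 0) * sin (β 1) * sin (β 2) * sin (β 3)) := by
      rw [cos_add, cos_add, cos_sub, cos_sub]
      linear_combination (-sin (β 1) ^ 2) * hsc 0 - (1 - cos (β 0) ^ 2) * hsc 1
        - sin (β 3) ^ 2 * hsc 2 - (1 - cos (β 2) ^ 2) * hsc 3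
    rw [key]
    linarith
  have hC := pos_of_mul_pos_left hprod hD.le
  have hlt : β 0 + β 1 + (β 2 + β 3) < π := by
    by_contra hcon
    have h := cos_le_cos_of_nonneg_of_le_pi (x := π - (β 2 + β 3)) (y := β 0 + β 1)
      (by linarith [hle 2, hle 3]) (by linarith [hle 0, hle 1]) (by linarith)
    rw [cos_pi_sub] at h
    linarith
  rw [hβ, hβ, hβ, hβ] at hlt
  linarith
end

section
/- For every real number θ with 5π/3 < θ < 2π and every δ ∈ {2π/3, π, 4π/3}, one has cos(δ/2) ≠ (1 − 2cos(θ)) / (4cos(θ/2)). -/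
open Real

/-- For `θ ∈ (5π/3, 2π)` and `δ ∈ {2π/3, π, 4π/3}`, one has
`cos(δ/2) ≠ (1 − 2cos θ)/(4cos(θ/2))`. -/
theorem type_III_north_pole_excluded (θ δ : ℝ) (hθ : 5 * π / 3 < θ) (hθ' : θ < 2 * π)
    (hδ : δ = 2 * π / 3 ∨ δ = π ∨ δ = 4 * π / 3) :
    cos (δ / 2) ≠ (1 - 2 * cos θ) / (4 * cos (θ / 2)) := by
  have hp := Real.pi_pos
  have hc : cos (θ / 2) < 0 :=
    cos_neg_of_pi_div_two_lt_of_lt (by linarith) (by linarith)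
  have hm : -1 ≤ cos (θ / 2) := neg_one_le_cos _
  have hθc : 1 / 2 < cos θ := by
    rw [← cos_two_pi_sub θ, ← cos_pi_div_three]
    exact cos_lt_cos_of_nonneg_of_le_pi (by linarith) (by linarith) (by linarith)
  have hd : cos θ = 2 * cos (θ / 2) ^ 2 - 1 := by
    rw [← cos_two_mul]; congr 1; ring
  intro h
  rw [hd] at h hθc
  rw [eq_div_iff (by linarith)] at h
  rcases hδ with rfl | rfl | rfl
  · rw [show 2 * π / 3 / 2 = π / 3 by ring, cos_pi_div_three] at h
    nlinarith
  · rw [cos_pi_div_two] at h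
    nlinarith
  · rw [show 4 * π / 3 / 2 = π - π / 3 by ring, cos_pi_sub, cos_pi_div_three] at h
    nlinarith
end

section
/- Let θ be a real number with 5π/3 < θ < 2π, and let x be a real number. Then (−x + cos(π−θ/2)²) / sin(π−θ/2)² = (cos(π−θ/2)·(1 + cos(4π−2θ))) / (sin(π−θ/2)·sin(4π−2θ)) if and only if x = 1/2. -/
open Real

/-- For `θ ∈ (5π/3, 2π)` and `x ∈ ℝ`:
`(−x + cos(π−θ/2)²)/sin(π−θ/2)² = cos(π−θ/2)·(1 + cos(4π−2θ))/(sin(π−θ/2)·sin(4π−2θ))`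
if and only if `x = 1/2`. -/
theorem type_IV_star_north_pole_delta (θ x : ℝ) (hθ : 5 * π / 3 < θ) (hθ' : θ < 2 * π) :
    (-x + cos (π - θ / 2) ^ 2) / sin (π - θ / 2) ^ 2 =
        cos (π - θ / 2) * (1 + cos (4 * π - 2 * θ)) /
          (sin (π - θ / 2) * sin (4 * π - 2 * θ)) ↔
      x = 1 / 2 := by
  have e : 4 * π - 2 * θ = 2 * (2 * (π - θ / 2)) := by ring
  rw [e]
  have h0 : 0 < π - θ / 2 := by linarith
  have h1 : π - θ / 2 < π / 6 := by linarith
  generalize π - θ / 2 = a at h0 h1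
  have hpi := Real.pi_pos
  have hs : sin a ≠ 0 := (Real.sin_pos_of_pos_of_lt_pi h0 (by linarith)).ne'
  have hc : cos a ≠ 0 := (Real.cos_pos_of_mem_Ioo ⟨by linarith, by linarith⟩).ne'
  have hc2 : cos (2 * a) ≠ 0 := (Real.cos_pos_of_mem_Ioo ⟨by linarith, by linarith⟩).ne'
  have hR : cos a * (1 + cos (2 * (2 * a))) / (sin a * sin (2 * (2 * a)))
      = (cos (2 * a) / 2) / sin a ^ 2 := by
    rw [Real.cos_two_mul (2 * a), Real.sin_two_mul (2 * a), Real.sin_two_mul a]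
    field_simp
    ring
  rw [hR, div_left_inj' (pow_ne_zero 2 hs), Real.cos_two_mul a]
  constructor <;> intro h <;> linarith
end
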